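/- arXiv:2503.13243 — 3 statements merged into one kernel-verified Lean document; each statement's English description precedes it below -/
import Mathlib

section
/- The orbit of the vertex (1,1) under the cyclic group ⟨σ₁⟩ is the entire vertex set of Γ; equivalently, σ₁ permutes all m·n vertices of Γ in a single cycle (so the corresponding facial cycle is a Hamiltonian cycle of Γ). -/
/-!
The permutation `σ₁` is a skew product over the rotation `i ↦ i + 1` of `ZMod n`: it moves the base
coordinate along a single cycle and translates the fiber coordinate by an amount depending only on
the base coordinate. One full turn of the base returns every fiber to itself, translated by the sum
of all these amounts. When that sum generates the fiber, repeated turns reach every point of the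
fiber, so the skew product is itself a single cycle. For `σ₁` only the column `i = 1` contributes,
and the sum is `1`, a generator of `ZMod m`.
-/

/-- The lexicographic product `C_n[mK_1]`: vertices `(i,j)` with `(i₁,j₁) ~ (i₂,j₂)`
iff `i₂ = i₁ + 1` or `i₁ = i₂ + 1` (indices modulo `n`). -/
def lexCycle (n m : ℕ) : SimpleGraph (ZMod n × ZMod m) :=
  SimpleGraph.fromRel (fun u v => v.1 = u.1 + 1)

/-- The representative in `{1, …, n}` of `i` modulo `n`. -/
def zrep {n : ℕ} (i : ZMod n) : ℕ := if i.val = 0 then n else i.val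

open Equiv Finset

section SkewProduct

variable {α A : Type*} [AddCommGroup A]

/-- The skew product of a permutation `e` of the base `α` with the cocycle `c : α → A`: the
permutation `(x, a) ↦ (e x, a + c x)` of `α × A`. -/
def skewProduct (e : Perm α) (c : α → A) : Perm (α × A) :=
  prodShear e fun x => Equiv.addRight (c x)

@[simp]
theorem skewProduct_apply (e : Perm α) (c : α → A) (x : α) (a : A) :
    skewProduct e c (x, a) = (e x, a + c x) :=
  rfl

theorem skewProduct_pow_apply (e : Perm α) (c : α → A) (k : ℕ) (x : α) (a : A) :
    (skewProduct e c ^ k) (x, a) = ((e ^ k) x, a + ∑ r ∈ range k, c ((e ^ r) x)) := by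
  induction k with
  | zero => simp
  | succ k ih =>
    rw [pow_succ', Perm.mul_apply, ih, skewProduct_apply, pow_succ', Perm.mul_apply,
      sum_range_succ, add_assoc]

end SkewProduct

theorem sum_range_card_pow_apply_of_isCycleOn {α M : Type*} [AddCommMonoid M] {e : Perm α}
    {s : Finset α} (he : e.IsCycleOn s) {x : α} (hx : x ∈ s) (f : α → M) :
    ∑ k ∈ range #s, f ((e ^ k) x) = ∑ y ∈ s, f y := by
  refine sum_nbij (fun k => (e ^ k) x) ?_ ?_ ?_ fun _ _ => rfl
  · exact fun k _ => (he.1.perm_pow k).mapsTo hx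
  · intro k hk l hl hkl
    rw [coe_range, Set.mem_Iio] at hk hl
    exact ((he.pow_apply_eq_pow_apply hx).1 hkl).eq_of_lt_of_lt hk hl
  · intro y hy
    obtain ⟨k, hk, hky⟩ := he.exists_pow_eq hx hy
    exact ⟨k, mem_coe.2 (mem_range.2 hk), hky⟩

section SkewProductOverCycle

variable {α A : Type*} [Fintype α] [AddCommGroup A] {e : Perm α}

theorem skewProduct_pow_card_apply (he : e.IsCycleOn Set.univ) (c : α → A) (x : α) (a : A) :
    (skewProduct e c ^ Fintype.card α) (x, a) = (x, a + ∑ y, c y) := by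
  rw [← coe_univ] at he
  rw [skewProduct_pow_apply, ← card_univ, he.pow_card_apply (mem_univ x),
    sum_range_card_pow_apply_of_isCycleOn he (mem_univ x)]

theorem sameCycle_skewProduct_add_zsmul (he : e.IsCycleOn Set.univ) (c : α → A) (x : α) (a : A)
    (q : ℤ) : (skewProduct e c).SameCycle (x, a) (x, a + q • ∑ y, c y) := by
  have one_turn (b : A) : (skewProduct e c).SameCycle (x, b) (x, b + ∑ y, c y) :=
    ⟨Fintype.card α, by rw [zpow_natCast, skewProduct_pow_card_apply he]⟩
  induction q with
  | zero => rw [zero_zsmul, add_zero]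
  | succ q ih =>
    rw [add_one_zsmul, ← add_assoc]
    exact ih.trans (one_turn _)
  | pred q ih =>
    have last_turn := one_turn (a + (-(q : ℤ) - 1) • ∑ y, c y)
    rw [add_assoc, ← add_one_zsmul, sub_add_cancel] at last_turn
    exact ih.trans last_turn.symm

theorem isCycleOn_univ_skewProduct (he : e.IsCycleOn Set.univ) {c : α → A}
    (hc : AddSubgroup.zmultiples (∑ y, c y) = ⊤) :
    (skewProduct e c).IsCycleOn Set.univ := by
  refine ⟨(skewProduct e c).bijective.bijOn_univ, ?_⟩
  rintro ⟨x, a⟩ - ⟨y, b⟩ -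
  obtain ⟨k, -, rfl⟩ := (coe_univ (α := α) ▸ he).exists_pow_eq (mem_univ x) (mem_univ y)
  obtain ⟨a', ha'⟩ : ∃ a', (skewProduct e c ^ k) (x, a) = ((e ^ k) x, a') :=
    ⟨_, skewProduct_pow_apply e c k x a⟩
  obtain ⟨q, hq⟩ : ∃ q : ℤ, q • ∑ y, c y = b - a' :=
    AddSubgroup.mem_zmultiples_iff.1 (hc ▸ AddSubgroup.mem_top _)
  have same_fiber := sameCycle_skewProduct_add_zsmul he c ((e ^ k) x) a' q
  rwa [hq, add_sub_cancel, ← ha', Perm.sameCycle_pow_left] at same_fiber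

end SkewProductOverCycle

theorem isCycleOn_univ_addRight {G : Type*} [AddGroup G] {g : G}
    (hg : AddSubgroup.zmultiples g = ⊤) : (Equiv.addRight g).IsCycleOn Set.univ := by
  refine ⟨(Equiv.addRight g).bijective.bijOn_univ, fun x _ y _ => ?_⟩
  obtain ⟨k, hk⟩ : ∃ k : ℤ, k • g = -x + y :=
    AddSubgroup.mem_zmultiples_iff.1 (hg ▸ AddSubgroup.mem_top _)
  refine ⟨k, ?_⟩
  rw [zsmul_addRight, hk]
  exact add_neg_cancel_left x y

theorem zmultiples_one_zmod (n : ℕ) : AddSubgroup.zmultiples (1 : ZMod n) = ⊤ := by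
  refine (AddSubgroup.eq_top_iff' _).2 fun i => ?_
  obtain ⟨k, rfl⟩ := ZMod.intCast_surjective i
  exact AddSubgroup.intCast_mem_zmultiples_one k

theorem statement5_general {n : ℕ} [NeZero n] {A : Type*} [AddCommGroup A] {u : A}
    (hu : AddSubgroup.zmultiples u = ⊤) (i₀ : ZMod n) (σ : Perm (ZMod n × A))
    (hσ : ∀ i a, σ (i, a) = if i = i₀ then (i + 1, a + u) else (i + 1, a)) :
    σ.IsCycleOn Set.univ := by
  have hσ_skew : σ = skewProduct (Equiv.addRight 1) (Pi.single i₀ u) := by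
    ext1 ⟨i, a⟩
    rw [hσ, skewProduct_apply, coe_addRight, Pi.single_apply]
    split_ifs <;> simp only [add_zero]
  rw [hσ_skew]
  apply isCycleOn_univ_skewProduct (isCycleOn_univ_addRight (zmultiples_one_zmod n))
  rwa [sum_pi_single', if_pos (mem_univ i₀)]

theorem statement5
    (m s n : ℕ) (hm : 3 ≤ m) (hmo : Odd m) (hs : 0 < s) (hn : n = s * m)
    (σ₁ : Equiv.Perm (ZMod n × ZMod m))
    (hσ₁ : ∀ (i : ZMod n) (j : ZMod m),
      σ₁ (i, j) = if i = 1 then (i + 1, j + 1) else (i + 1, j))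
    :
    ∀ x : ZMod n × ZMod m, ∃ k : ℕ, (σ₁ ^ k) ((1, 1) : ZMod n × ZMod m) = x := by
  have : NeZero m := ⟨by omega⟩
  have : NeZero n := ⟨hn ▸ (Nat.mul_pos hs m.pos_of_neZero).ne'⟩
  exact fun x => (statement5_general (zmultiples_one_zmod m) 1 σ₁ hσ₁).exists_pow_eq'
    Set.finite_univ (Set.mem_univ _) (Set.mem_univ x)
end

section
/- The permutation σ₂ fixes the vertex v = (1,1) of Γ, and the cyclic group ⟨σ₂⟩ acts transitively on the 2m neighbours of v. -/
section SameCycle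

open Equiv.Perm

variable {β G : Type*} [AddGroup G]

theorem sameCycle_add_of_mem_zmultiples {σ : Equiv.Perm β} {f : G → β} {g y : G}
    (hstep : ∀ x, σ.SameCycle (f x) (f (x + g))) (hy : y ∈ AddSubgroup.zmultiples g) (x : G) :
    σ.SameCycle (f x) (f (x + y)) := by
  obtain ⟨k, rfl⟩ := AddSubgroup.mem_zmultiples_iff.1 hy
  induction k with
  | zero => simpa using SameCycle.refl σ (f x)
  | succ k ih => simpa only [add_zsmul, one_zsmul, add_assoc] using (ih ⟨_, rfl⟩).trans (hstep _)
  | pred k ih =>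
    have hback := (hstep (x + (-(k : ℤ) - 1) • g)).symm
    rw [add_assoc, ← add_one_zsmul, sub_add_cancel] at hback
    exact (ih ⟨_, rfl⟩).trans hback

variable {α : Type*} {σ : Equiv.Perm (α × G)} {a b : α} {c d : G}

theorem bijOn_pair_prod_univ_of_swap_fibres (hab : ∀ x, σ (a, x) = (b, x + c))
    (hba : ∀ x, σ (b, x) = (a, x + d)) :
    Set.BijOn σ ({a, b} ×ˢ Set.univ) ({a, b} ×ˢ Set.univ) := by
  refine ⟨?_, σ.injective.injOn, ?_⟩
  · rintro ⟨i, x⟩ ⟨rfl | rfl, -⟩ <;> simp [hab, hba]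
  · rintro ⟨i, x⟩ ⟨rfl | rfl, -⟩
    · exact ⟨(b, x - d), by simp, by simp [hba]⟩
    · exact ⟨(a, x - c), by simp, by simp [hab]⟩

theorem isCycleOn_pair_prod_univ_of_swap_fibres (hab : ∀ x, σ (a, x) = (b, x + c))
    (hba : ∀ x, σ (b, x) = (a, x + d)) (hcd : ∀ g, g ∈ AddSubgroup.zmultiples (c + d)) :
    σ.IsCycleOn ({a, b} ×ˢ Set.univ) := by
  have round_trip (x : G) : σ.SameCycle (a, x) (a, x + (c + d)) :=
    ⟨2, by rw [zpow_ofNat, sq, mul_apply, hab, hba, add_assoc]⟩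
  have reach_a (x : G) : σ.SameCycle (a, 0) (a, x) := by
    simpa only [zero_add] using sameCycle_add_of_mem_zmultiples round_trip (hcd x) 0
  have reach_b (x : G) : σ.SameCycle (a, 0) (b, x) := by
    simpa only [hab, sub_add_cancel] using (reach_a (x - c)).apply_right
  have reach : ∀ w ∈ ({a, b} ×ˢ Set.univ : Set (α × G)), σ.SameCycle (a, 0) w := by
    rintro ⟨i, x⟩ ⟨rfl | rfl, -⟩
    exacts [reach_a x, reach_b x]
  exact ⟨bijOn_pair_prod_univ_of_swap_fibres hab hba,
    fun w hw w' hw' ↦ (reach w hw).symm.trans (reach w' hw')⟩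

end SameCycle

theorem mem_zmultiples_of_isUnit {m : ℕ} {u : ZMod m} (hu : IsUnit u) (x : ZMod m) :
    x ∈ AddSubgroup.zmultiples u := by
  obtain ⟨t, rfl⟩ := hu.dvd (a := x)
  obtain ⟨k, rfl⟩ := ZMod.intCast_surjective t
  exact ⟨k, by simp [mul_comm]⟩

theorem lexCycle_adj_iff {n m : ℕ} [Nontrivial (ZMod n)] {u v : ZMod n × ZMod m} :
    (lexCycle n m).Adj u v ↔ v.1 = u.1 + 1 ∨ u.1 = v.1 + 1 := by
  rw [lexCycle, SimpleGraph.fromRel_adj, and_iff_right_iff_imp]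
  rintro h rfl
  simp at h

theorem lexCycle_neighborSet {n m : ℕ} [Nontrivial (ZMod n)] (v : ZMod n × ZMod m) :
    (lexCycle n m).neighborSet v = {v.1 + 1, v.1 - 1} ×ˢ Set.univ := by
  ext w
  simp [lexCycle_adj_iff, eq_sub_iff_add_eq, eq_comm]

theorem zrep_zero {n : ℕ} : zrep (0 : ZMod n) = n := by
  simp [zrep]

theorem zrep_two {n : ℕ} (hn : 2 ≤ n) : zrep (2 : ZMod n) = 2 := by
  rw [zrep, ZMod.val_two_eq_two_mod]
  obtain rfl | hn := hn.eq_or_lt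
  · rfl
  · rw [Nat.mod_eq_of_lt hn, if_neg two_ne_zero]

/-- The amount `(-1) ^ (ī - 1) * (2 * ī - 3)` by which `σ₂` translates the second coordinate on
the fibre over `i ≠ 1`. The truncated subtraction is harmless, since `ī ≥ 2` there. -/
def fibreShift {n : ℕ} (m : ℕ) (i : ZMod n) : ZMod m :=
  (-1) ^ (zrep i - 1) * ((2 * zrep i - 3 : ℕ) : ZMod m)

theorem fibreShift_two {n m : ℕ} (hn : 2 ≤ n) : fibreShift m (2 : ZMod n) = -1 := by
  simp [fibreShift, zrep_two hn]

theorem fibreShift_zero {n m : ℕ} (hn : 2 ≤ n) (hmn : m ∣ n) :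
    fibreShift m (0 : ZMod n) = (-1) ^ n * 3 := by
  have hn0 : (n : ZMod m) = 0 := (ZMod.natCast_eq_zero_iff n m).2 hmn
  obtain ⟨k, rfl⟩ := Nat.exists_eq_add_of_le' hn
  rw [fibreShift, zrep_zero, Nat.cast_sub (by lia), Nat.cast_mul, hn0, Nat.add_sub_assoc (by lia)]
  push_cast
  ring

theorem isUnit_two_of_odd {m : ℕ} (hm : Odd m) : IsUnit (2 : ZMod m) := by
  exact_mod_cast (ZMod.isUnit_iff_coprime 2 m).2 (Nat.coprime_two_left.2 hm)

theorem isUnit_neg_one_add_neg_one_pow_mul_three {m : ℕ} (hm : Odd m) (n : ℕ) :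
    IsUnit (-1 + (-1) ^ n * 3 : ZMod m) := by
  have h2 := isUnit_two_of_odd hm
  obtain hn | hn := n.even_or_odd
  · rw [hn.neg_one_pow]
    convert h2 using 1
    ring
  · rw [hn.neg_one_pow]
    convert (h2.mul h2).neg using 1
    ring

theorem statement9_general {m n : ℕ} (hm : Odd m) (hn : 2 ≤ n) (hmn : m ∣ n)
    (σ₂ : Equiv.Perm (ZMod n × ZMod m))
    (hσ₂ : ∀ i j, σ₂ (i, j) = if i = 1 then (2 - i, 2 - j) else (2 - i, j + fibreShift m i)) :
    σ₂ (1, 1) = (1, 1) ∧ σ₂.IsCycleOn ((lexCycle n m).neighborSet (1, 1)) := by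
  have : Fact (1 < n) := ⟨hn⟩
  have one_add_one : (1 + 1 : ZMod n) = 2 := one_add_one_eq_two
  have two_ne_one : (2 : ZMod n) ≠ 1 := by simp [← one_add_one]
  have map_two (j : ZMod m) : σ₂ (2, j) = (0, j + -1) := by
    rw [hσ₂, if_neg two_ne_one, fibreShift_two hn, sub_self]
  have map_zero (j : ZMod m) : σ₂ (0, j) = (2, j + (-1) ^ n * 3) := by
    rw [hσ₂, if_neg zero_ne_one, fibreShift_zero hn hmn, sub_zero]
  refine ⟨by rw [hσ₂, if_pos rfl]; congr 1 <;> ring, ?_⟩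
  rw [lexCycle_neighborSet, one_add_one, sub_self]
  exact isCycleOn_pair_prod_univ_of_swap_fibres map_two map_zero
    (mem_zmultiples_of_isUnit (isUnit_neg_one_add_neg_one_pow_mul_three hm n))

theorem statement9
    (m s n : ℕ) (hm : 3 ≤ m) (hmo : Odd m) (hs : 0 < s) (hso : Odd s) (hn : n = s * m)
    (σ₂ : Equiv.Perm (ZMod n × ZMod m))
    (hσ₂ : ∀ (i : ZMod n) (j : ZMod m),
      σ₂ (i, j) = if i = 1 then (2 - i, 2 - j)
        else (2 - i, j + (-1 : ZMod m) ^ (zrep i - 1) * ((2 * zrep i - 3 : ℕ) : ZMod m)))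
    :
    σ₂ ((1, 1) : ZMod n × ZMod m) = (1, 1) ∧
      (∀ w w' : ZMod n × ZMod m,
        (lexCycle n m).Adj ((1, 1) : ZMod n × ZMod m) w →
        (lexCycle n m).Adj ((1, 1) : ZMod n × ZMod m) w' →
        ∃ k : ℤ, (σ₂ ^ k) w = w') := by
  have hmn : m ≤ n := hn ▸ Nat.le_mul_of_pos_left m hs
  have h := statement9_general hmo (by lia) (hn ▸ dvd_mul_left m s) σ₂ hσ₂
  exact ⟨h.1, fun w w' hw hw' ↦ h.2.2 hw hw'⟩
end

section
/- The subgroup G = ⟨σ₁, σ₂⟩ of the automorphism group of Γ acts transitively on the arcs of Γ, and the stabiliser in G of the arc ((1,1),(2,1)) has order 2. -/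
section ZRep

variable {n : ℕ} [NeZero n]

theorem zrep_eq_of_natCast_eq {i : ZMod n} {z : ℕ} (h_pos : 1 ≤ z) (h_le : z ≤ n)
    (h : (z : ZMod n) = i) : zrep i = z := by
  subst h
  unfold zrep
  rw [ZMod.val_natCast]
  rcases h_le.lt_or_eq with h_lt | rfl
  · rw [Nat.mod_eq_of_lt h_lt, if_neg (by omega)]
  · simp

theorem natCast_zrep (i : ZMod n) : (zrep i : ZMod n) = i := by
  unfold zrep
  split_ifs with h
  · rw [ZMod.natCast_self, (ZMod.val_eq_zero i).1 h]
  · exact ZMod.natCast_zmod_val i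

theorem one_le_zrep (i : ZMod n) : 1 ≤ zrep i := by
  have := NeZero.pos n
  unfold zrep
  split_ifs <;> omega

theorem zrep_le (i : ZMod n) : zrep i ≤ n := by
  unfold zrep
  split_ifs
  · exact le_rfl
  · exact i.val_lt.le

theorem zrep_one : zrep (1 : ZMod n) = 1 :=
  zrep_eq_of_natCast_eq le_rfl (NeZero.pos n) Nat.cast_one

theorem zrep_add_one {i : ZMod n} (hi : i ≠ 0) : zrep (i + 1) = zrep i + 1 := by
  have h_ne : zrep i ≠ n := fun h ↦ hi (by rw [← natCast_zrep i, h, ZMod.natCast_self])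
  have h_le := zrep_le i
  exact zrep_eq_of_natCast_eq (by omega) (by omega) (by rw [Nat.cast_succ, natCast_zrep])

theorem one_lt_zrep {i : ZMod n} (hi : i ≠ 1) : 1 < zrep i := by
  refine (one_le_zrep i).lt_of_ne' fun h ↦ hi ?_
  rw [← natCast_zrep i, h, Nat.cast_one]

theorem zrep_two_sub_add_zrep {i : ZMod n} (hi : i ≠ 1) : zrep (2 - i) + zrep i = n + 2 := by
  have h_lt := one_lt_zrep hi
  have h_le := zrep_le i
  have h_eq : zrep (2 - i) = n + 2 - zrep i := by
    refine zrep_eq_of_natCast_eq (by omega) (by omega) ?_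
    rw [Nat.cast_sub (by omega), natCast_zrep]
    simp
  omega

end ZRep

theorem isUnit_two_of_odd_s11 {n : ℕ} (hn : Odd n) : IsUnit (2 : ZMod n) := by
  simpa using (ZMod.isUnit_iff_coprime 2 n).2 (Nat.coprime_two_left.2 hn)

theorem exists_natCast_eq_and_neg_one_pow_eq {n : ℕ} (hn : Odd n) (c : ZMod n) (δ : ℤˣ) :
    ∃ k : ℕ, (k : ZMod n) = c ∧ (-1) ^ k = δ := by
  have : NeZero n := ⟨hn.pos.ne'⟩
  by_cases h : (-1) ^ c.val = δ
  · exact ⟨c.val, ZMod.natCast_zmod_val c, h⟩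
  · refine ⟨c.val + n, by simp, ?_⟩
    rw [pow_add, hn.neg_one_pow, mul_neg_one, Int.units_ne_iff_eq_neg.1 h, neg_neg]

section SignedAffine

variable {R S : Type*} [CommRing R] [CommRing S]

theorem intCast_units_mul_self (ε : ℤˣ) : ((ε : ℤ) : R) * ((ε : ℤ) : R) = 1 := by
  rw [← Int.cast_mul, Int.units_coe_mul_self, Int.cast_one]

/-- The permutation `(i, x) ↦ (± i + c, ± x + α + β φ(i))` of `R × S`, affine on the base and on
each fibre; the two signs are elements of `ℤˣ`. -/
def signedAffinePerm (φ : R →+* S) (ε : ℤˣ) (c : R) (δ : ℤˣ) (α β : S) : Equiv.Perm (R × S) where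
  toFun v := ((ε : ℤ) * v.1 + c, (δ : ℤ) * v.2 + α + β * φ v.1)
  invFun v := ((ε : ℤ) * v.1 + -((ε : ℤ) * c),
    (δ : ℤ) * v.2 + (δ : ℤ) * (β * (ε : ℤ) * φ c - α) + -((δ : ℤ) * β * (ε : ℤ)) * φ v.1)
  left_inv v := by
    have hε := intCast_units_mul_self (R := R) ε
    have hεS := intCast_units_mul_self (R := S) ε
    have hδ := intCast_units_mul_self (R := S) δ
    ext
    · linear_combination v.1 * hε
    · simp only [map_add, map_mul, map_intCast]
      linear_combination v.2 * hδ - (δ : ℤ) * β * φ v.1 * hεS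
  right_inv v := by
    have hε := intCast_units_mul_self (R := R) ε
    have hδ := intCast_units_mul_self (R := S) δ
    ext
    · linear_combination (v.1 - c) * hε
    · simp only [map_add, map_mul, map_neg, map_intCast]
      linear_combination (v.2 - α + β * (ε : ℤ) * (φ c - φ v.1)) * hδ

variable (φ : R →+* S)

@[simp]
theorem signedAffinePerm_apply (ε : ℤˣ) (c : R) (δ : ℤˣ) (α β : S) (v : R × S) :
    signedAffinePerm φ ε c δ α β v =
      ((ε : ℤ) * v.1 + c, (δ : ℤ) * v.2 + α + β * φ v.1) :=
  rfl

theorem signedAffinePerm_one : signedAffinePerm φ 1 0 1 0 0 = 1 := by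
  ext v <;> simp

theorem signedAffinePerm_mul (ε ε' : ℤˣ) (c c' : R) (δ δ' : ℤˣ) (α α' β β' : S) :
    signedAffinePerm φ ε' c' δ' α' β' * signedAffinePerm φ ε c δ α β =
      signedAffinePerm φ (ε' * ε) ((ε' : ℤ) * c + c') (δ' * δ)
        ((δ' : ℤ) * α + α' + β' * φ c) ((δ' : ℤ) * β + β' * (ε : ℤ)) := by
  ext v
  · simp only [Equiv.Perm.mul_apply, signedAffinePerm_apply, Units.val_mul, Int.cast_mul]
    ring
  · simp only [Equiv.Perm.mul_apply, signedAffinePerm_apply, Units.val_mul, Int.cast_mul,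
      map_add, map_mul, map_intCast]
    ring

theorem signedAffinePerm_inv (ε : ℤˣ) (c : R) (δ : ℤˣ) (α β : S) :
    (signedAffinePerm φ ε c δ α β)⁻¹ =
      signedAffinePerm φ ε (-((ε : ℤ) * c)) δ ((δ : ℤ) * (β * (ε : ℤ) * φ c - α))
        (-((δ : ℤ) * β * (ε : ℤ))) :=
  Equiv.ext fun _ ↦ rfl

/-- The group of all permutations `(i, x) ↦ (± i + c, ± x + α + β φ(i))` of `R × S`. -/
def signedAffineGroup : Subgroup (Equiv.Perm (R × S)) where
  carrier := {g | ∃ ε c δ α β, signedAffinePerm φ ε c δ α β = g}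
  one_mem' := ⟨1, 0, 1, 0, 0, signedAffinePerm_one φ⟩
  mul_mem' := by
    rintro _ _ ⟨ε', c', δ', α', β', rfl⟩ ⟨ε, c, δ, α, β, rfl⟩
    exact ⟨_, _, _, _, _, (signedAffinePerm_mul φ ε ε' c c' δ δ' α α' β β').symm⟩
  inv_mem' := by
    rintro _ ⟨ε, c, δ, α, β, rfl⟩
    exact ⟨_, _, _, _, _, (signedAffinePerm_inv φ ε c δ α β).symm⟩

theorem signedAffinePerm_mem (ε : ℤˣ) (c : R) (δ : ℤˣ) (α β : S) :
    signedAffinePerm φ ε c δ α β ∈ signedAffineGroup φ :=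
  ⟨ε, c, δ, α, β, rfl⟩

theorem exists_mem_signedAffineGroup_map_arc {u₁ w₁ u₂ w₂ : R × S} {e f : ℤˣ}
    (h₁ : w₁.1 = u₁.1 + (e : ℤ)) (h₂ : w₂.1 = u₂.1 + (f : ℤ)) :
    ∃ g ∈ signedAffineGroup φ, g u₁ = u₂ ∧ g w₁ = w₂ := by
  have heR := intCast_units_mul_self (R := R) e
  have heS := intCast_units_mul_self (R := S) e
  -- `β` is the change of fibre slope along the arc, `α` then matches the first endpoints.
  let β : S := (e : ℤ) * ((w₂.2 - w₁.2) - (u₂.2 - u₁.2))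
  refine ⟨signedAffinePerm φ (e * f) (u₂.1 - (e : ℤ) * (f : ℤ) * u₁.1) 1
    (u₂.2 - u₁.2 - β * φ u₁.1) β, signedAffinePerm_mem φ .., ?_, ?_⟩
  · ext
    · simp
    · simp only [signedAffinePerm_apply, Units.val_one, Int.cast_one]
      ring
  · ext
    · simp only [signedAffinePerm_apply, Units.val_mul, Int.cast_mul, h₁, h₂]
      linear_combination (f : ℤ) * heR
    · simp only [signedAffinePerm_apply, Units.val_one, Int.cast_one, h₁, map_add, map_intCast, β]
      linear_combination ((w₂.2 - w₁.2) - (u₂.2 - u₁.2)) * heS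

/-- The permutation `(i, x) ↦ (i, ℓ(i) ± (x - ℓ(i)))`, where `ℓ` is the affine function
interpolating `u` and `w` when `w.1 = u.1 + 1`; the sign `+` gives the identity. -/
def arcReflection (u w : R × S) (δ : ℤˣ) : Equiv.Perm (R × S) :=
  signedAffinePerm φ 1 0 δ ((1 - (δ : ℤ)) * (u.2 - (w.2 - u.2) * φ u.1))
    ((1 - (δ : ℤ)) * (w.2 - u.2))

theorem arcReflection_injective (h : (-1 : S) ≠ 1) (u w : R × S) :
    Function.Injective (arcReflection φ u w) := by
  have h_apply (δ : ℤˣ) : (arcReflection φ u w δ (u.1, u.2 + 1)).2 = u.2 + (δ : ℤ) := by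
    simp only [arcReflection, signedAffinePerm_apply]
    ring
  intro δ δ' hδ
  have h_cast : ((δ : ℤ) : S) = (δ' : ℤ) := by
    rw [← add_right_inj u.2, ← h_apply, ← h_apply, hδ]
  rcases Int.units_eq_one_or δ with rfl | rfl <;> rcases Int.units_eq_one_or δ' with rfl | rfl
  · rfl
  · exact absurd h_cast (by simpa using h.symm)
  · exact absurd h_cast (by simpa using h)
  · rfl

theorem setOf_mem_signedAffineGroup_fix_arc {u w : R × S} (huw : w.1 = u.1 + 1) :
    {g | g ∈ signedAffineGroup φ ∧ g u = u ∧ g w = w} = Set.range (arcReflection φ u w) := by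
  ext g
  constructor
  · rintro ⟨⟨ε, c, δ, α, β, rfl⟩, hu, hw⟩
    obtain ⟨hu₁, hu₂⟩ := Prod.ext_iff.1 hu
    obtain ⟨hw₁, hw₂⟩ := Prod.ext_iff.1 hw
    simp only [signedAffinePerm_apply, huw, map_add, map_one] at hu₁ hu₂ hw₁ hw₂
    have hε : ((ε : ℤ) : R) = 1 := by linear_combination hw₁ - hu₁
    have hc : c = 0 := by linear_combination hu₁ - u.1 * hε
    have hβ : β = (1 - (δ : ℤ)) * (w.2 - u.2) := by linear_combination hw₂ - hu₂
    have hα : α = (1 - (δ : ℤ)) * (u.2 - (w.2 - u.2) * φ u.1) := by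
      linear_combination hu₂ - φ u.1 * hβ
    refine ⟨δ, ?_⟩
    ext v
    · simp [arcReflection, hε, hc]
    · simp [arcReflection, hα, hβ]
  · rintro ⟨δ, rfl⟩
    refine ⟨signedAffinePerm_mem φ .., Prod.ext ?_ ?_, Prod.ext ?_ ?_⟩
    · simp [arcReflection]
    · simp only [arcReflection, signedAffinePerm_apply]
      ring
    · simp [arcReflection]
    · simp only [arcReflection, signedAffinePerm_apply, huw, map_add, map_one]
      ring

theorem card_signedAffineGroup_fix_arc (h : (-1 : S) ≠ 1) {u w : R × S} (huw : w.1 = u.1 + 1) :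
    Nat.card {g | g ∈ signedAffineGroup φ ∧ g u = u ∧ g w = w} = 2 := by
  rw [setOf_mem_signedAffineGroup_fix_arc φ huw,
    Nat.card_range_of_injective (arcReflection_injective φ h u w), Nat.card_eq_fintype_card,
    Fintype.card_units_int]

/-- The form `(i, x) ↦ (i + 1, -x)` that `σ₁` takes in straightened coordinates. -/
def straightRotation : Equiv.Perm (R × S) := signedAffinePerm φ 1 1 (-1) 0 0

/-- The form `(i, x) ↦ (2 - i, -x - 6 + 4 φ(i))` that `σ₂` takes in straightened coordinates. -/
def straightReflection : Equiv.Perm (R × S) := signedAffinePerm φ (-1) 2 (-1) (-6) 4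

theorem straightRotation_pow (k : ℕ) :
    straightRotation φ ^ k = signedAffinePerm φ 1 k ((-1) ^ k) 0 0 := by
  induction k with
  | zero => simp [signedAffinePerm_one]
  | succ k ih =>
    rw [pow_succ, ih, straightRotation, signedAffinePerm_mul]
    congr 1 <;> simp [add_comm, pow_succ]

theorem straightReflection_sq :
    straightReflection φ ^ 2 = signedAffinePerm φ 1 0 1 8 (-8) := by
  rw [sq, straightReflection, signedAffinePerm_mul]
  congr 1 <;> norm_num [map_ofNat φ 2]

theorem signedAffinePerm_shear_pow (α β : S) (k : ℕ) :
    signedAffinePerm φ 1 0 1 α β ^ k = signedAffinePerm φ 1 0 1 (k * α) (k * β) := by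
  induction k with
  | zero => simp [signedAffinePerm_one]
  | succ k ih =>
    rw [pow_succ, ih, signedAffinePerm_mul, map_zero]
    congr 1 <;> push_cast <;> ring

end SignedAffine

section Generation

variable {n : ℕ} {S : Type*} [CommRing S] {φ : ZMod n →+* S}
  {H : Subgroup (Equiv.Perm (ZMod n × S))}

theorem signedAffinePerm_rotation_mem (hn : Odd n) (h_rot : straightRotation φ ∈ H)
    (c : ZMod n) (δ : ℤˣ) : signedAffinePerm φ 1 c δ 0 0 ∈ H := by
  obtain ⟨k, rfl, rfl⟩ := exists_natCast_eq_and_neg_one_pow_eq hn c δ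
  exact straightRotation_pow φ k ▸ H.pow_mem h_rot k

theorem signedAffinePerm_antidiagonal_shear_mem (hn : Odd n) (hφ : Function.Surjective φ)
    (h_refl : straightReflection φ ∈ H) (x : S) : signedAffinePerm φ 1 0 1 x (-x) ∈ H := by
  have : NeZero n := ⟨hn.pos.ne'⟩
  have h_unit : IsUnit (8 : ZMod n) := by
    convert (isUnit_two_of_odd_s11 hn).pow 3
    norm_num
  obtain ⟨y, rfl⟩ := hφ x
  obtain ⟨z, rfl⟩ := h_unit.dvd (a := y)
  obtain ⟨k, rfl⟩ := ZMod.natCast_zmod_surjective z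
  have h_pow := H.pow_mem (H.pow_mem h_refl 2) k
  rw [straightReflection_sq, signedAffinePerm_shear_pow] at h_pow
  convert h_pow using 2 <;> simp [map_ofNat φ 8, mul_comm]

theorem signedAffinePerm_shear_mem (hn : Odd n) (hφ : Function.Surjective φ)
    (h_rot : straightRotation φ ∈ H) (h_refl : straightReflection φ ∈ H) (α β : S) :
    signedAffinePerm φ 1 0 1 α β ∈ H := by
  have h_anti := signedAffinePerm_antidiagonal_shear_mem hn hφ h_refl
  -- Conjugating an antidiagonal shear by the translation `i ↦ i + 1` removes its constant term.
  have h_linear (x : S) : signedAffinePerm φ 1 0 1 0 x ∈ H := by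
    have h := H.mul_mem (signedAffinePerm_rotation_mem hn h_rot (-1) 1)
      (H.mul_mem (h_anti (-x)) (signedAffinePerm_rotation_mem hn h_rot 1 1))
    simpa [signedAffinePerm_mul] using h
  simpa [signedAffinePerm_mul] using H.mul_mem (h_anti α) (h_linear (β + α))

theorem closure_straightRotation_straightReflection (hn : Odd n) (hφ : Function.Surjective φ) :
    Subgroup.closure {straightRotation φ, straightReflection φ} = signedAffineGroup φ := by
  set H := Subgroup.closure {straightRotation φ, straightReflection φ}
  have h_rot : straightRotation φ ∈ H := Subgroup.subset_closure (by simp)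
  have h_refl : straightReflection φ ∈ H := Subgroup.subset_closure (by simp)
  have h_pos (c : ZMod n) (δ : ℤˣ) (α β : S) : signedAffinePerm φ 1 c δ α β ∈ H := by
    simpa [signedAffinePerm_mul] using
      H.mul_mem (signedAffinePerm_shear_mem hn hφ h_rot h_refl (α - β * φ c) β)
        (signedAffinePerm_rotation_mem hn h_rot c δ)
  apply le_antisymm
  · rw [Subgroup.closure_le]
    rintro _ (rfl | rfl)
    · exact signedAffinePerm_mem φ ..
    · exact signedAffinePerm_mem φ ..
  · rintro _ ⟨ε, c, δ, α, β, rfl⟩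
    rcases Int.units_eq_one_or ε with rfl | rfl
    · exact h_pos c δ α β
    · have h := H.mul_mem
        (h_pos (c - 2) (-δ) (α + 2 * (δ : ℤ) + 2 * β) (-β - 4 * (δ : ℤ))) h_refl
      rw [straightReflection, signedAffinePerm_mul, neg_mul_neg, mul_one, one_mul,
        map_ofNat φ 2] at h
      convert h using 1
      congr 1 <;> push_cast <;> ring

end Generation

section Straighten

variable {n : ℕ} {S : Type*} [CommRing S]

theorem neg_one_pow_mul_self (k : ℕ) : (-1 : S) ^ k * (-1) ^ k = 1 := by
  rw [← mul_pow, neg_mul_neg, one_mul, one_pow]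

theorem neg_one_pow_zrep_two_sub (hn : Odd n) {i : ZMod n} (hi : i ≠ 1) :
    (-1 : S) ^ zrep (2 - i) = -(-1) ^ zrep i := by
  have : NeZero n := ⟨hn.pos.ne'⟩
  have h_prod : (-1 : S) ^ zrep (2 - i) * (-1) ^ zrep i = -1 := by
    rw [← pow_add, zrep_two_sub_add_zrep hi, (hn.add_even even_two).neg_one_pow]
  linear_combination
    (-1) ^ zrep i * h_prod - (-1) ^ zrep (2 - i) * neg_one_pow_mul_self (S := S) (zrep i)

variable [Invertible (2 : S)]

/-- The change of fibre coordinate `j ↦ ± (2 j - 1)`, with sign alternating along `1, …, n`. It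
makes the permutations `σ₁` and `σ₂` affine. -/
def straighten : Equiv.Perm (ZMod n × S) where
  toFun v := (v.1, (-1) ^ zrep v.1 * (2 * v.2 - 1))
  invFun v := (v.1, ⅟2 * ((-1) ^ zrep v.1 * v.2 + 1))
  left_inv v := by
    have h_sign := neg_one_pow_mul_self (S := S) (zrep v.1)
    ext
    · rfl
    · linear_combination ⅟2 * (2 * v.2 - 1) * h_sign + v.2 * invOf_mul_self (2 : S)
  right_inv v := by
    have h_sign := neg_one_pow_mul_self (S := S) (zrep v.1)
    ext
    · rfl
    · linear_combination v.2 * h_sign +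
        (-1) ^ zrep v.1 * ((-1) ^ zrep v.1 * v.2 + 1) * mul_invOf_self (2 : S)

theorem straighten_apply (v : ZMod n × S) :
    straighten v = (v.1, (-1) ^ zrep v.1 * (2 * v.2 - 1)) :=
  rfl

theorem straighten_mul_eq_straightRotation_mul (hn : Odd n) (φ : ZMod n →+* S)
    {σ : Equiv.Perm (ZMod n × S)}
    (hσ : ∀ i j, σ (i, j) = if i = 0 then (i + 1, 1 - j) else (i + 1, j)) :
    straighten * σ = straightRotation φ * straighten := by
  have : NeZero n := ⟨hn.pos.ne'⟩
  ext ⟨i, j⟩ <;> simp only [Equiv.Perm.mul_apply, hσ, straightRotation, straighten_apply,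
    signedAffinePerm_apply]
  · split_ifs <;> simp
  · split_ifs with hi
    · subst hi
      rw [zero_add, zrep_zero, zrep_one, hn.neg_one_pow]
      push_cast
      ring
    · simp [zrep_add_one hi, pow_succ]

theorem straighten_mul_eq_straightReflection_mul (hn : Odd n) (φ : ZMod n →+* S)
    {σ : Equiv.Perm (ZMod n × S)}
    (hσ : ∀ i j, σ (i, j) = if i = 1 then (2 - i, 2 - j)
      else (2 - i, j + (-1) ^ (zrep i - 1) * ((2 * zrep i - 3 : ℕ) : S))) :
    straighten * σ = straightReflection φ * straighten := by
  have : NeZero n := ⟨hn.pos.ne'⟩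
  ext ⟨i, j⟩ <;> simp only [Equiv.Perm.mul_apply, hσ, straightReflection, straighten_apply,
    signedAffinePerm_apply]
  · split_ifs <;> push_cast <;> ring
  · split_ifs with hi
    · subst hi
      have h_two_sub : (2 - 1 : ZMod n) = 1 := by norm_num
      rw [h_two_sub, zrep_one, map_one]
      push_cast
      ring
    · have h_sign := neg_one_pow_mul_self (S := S) (zrep i)
      have h_pred : (-1 : S) ^ (zrep i - 1) = -(-1) ^ zrep i := by
        conv_rhs => rw [← Nat.sub_add_cancel (one_le_zrep i), pow_succ]
        ring
      have h_zrep_ge : 3 ≤ 2 * zrep i := by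
        have := one_lt_zrep hi
        omega
      have h_φ : φ i = zrep i := by rw [← map_natCast φ, natCast_zrep]
      rw [h_pred, neg_one_pow_zrep_two_sub hn hi, h_φ, Nat.cast_sub h_zrep_ge]
      push_cast
      linear_combination (2 * (2 * (zrep i : S) - 3)) * h_sign

theorem conj_straighten_mem_signedAffineGroup_iff (hn : Odd n) {φ : ZMod n →+* S}
    (hφ : Function.Surjective φ) {σ₁ σ₂ : Equiv.Perm (ZMod n × S)}
    (hσ₁ : straighten * σ₁ = straightRotation φ * straighten)
    (hσ₂ : straighten * σ₂ = straightReflection φ * straighten) (g : Equiv.Perm (ZMod n × S)) :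
    MulAut.conj straighten g ∈ signedAffineGroup φ ↔ g ∈ Subgroup.closure {σ₁, σ₂} := by
  have h_map : (Subgroup.closure {σ₁, σ₂}).map (MulAut.conj straighten).toMonoidHom =
      signedAffineGroup φ := by
    rw [← closure_straightRotation_straightReflection hn hφ, MonoidHom.map_closure,
      Set.image_pair]
    simp [MulAut.conj_apply, hσ₁, hσ₂]
  rw [← h_map]
  exact Subgroup.mem_map_iff_mem (MulAut.conj straighten).injective

end Straighten

theorem exists_fst_eq_add_units_of_lexCycle_adj {n m : ℕ} {u w : ZMod n × ZMod m}
    (h : (lexCycle n m).Adj u w) : ∃ e : ℤˣ, w.1 = u.1 + (e : ℤ) := by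
  rw [lexCycle, SimpleGraph.fromRel_adj] at h
  rcases h.2 with h | h
  · exact ⟨1, by simpa using h⟩
  · exact ⟨-1, by simp [h]⟩

theorem statement11
    (m s n : ℕ) (hm : 3 ≤ m) (hmo : Odd m) (hs : 0 < s) (hso : Odd s) (hn : n = s * m)
    (σ₁ σ₂ : Equiv.Perm (ZMod n × ZMod m))
    (hσ₁ : ∀ (i : ZMod n) (j : ZMod m),
      σ₁ (i, j) = if i = 0 then (i + 1, 1 - j) else (i + 1, j))
    (hσ₂ : ∀ (i : ZMod n) (j : ZMod m),
      σ₂ (i, j) = if i = 1 then (2 - i, 2 - j)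
        else (2 - i, j + (-1 : ZMod m) ^ (zrep i - 1) * ((2 * zrep i - 3 : ℕ) : ZMod m)))
    :
    (∀ u₁ w₁ u₂ w₂ : ZMod n × ZMod m,
        (lexCycle n m).Adj u₁ w₁ → (lexCycle n m).Adj u₂ w₂ →
        ∃ g ∈ Subgroup.closure {σ₁, σ₂}, g u₁ = u₂ ∧ g w₁ = w₂) ∧
      Nat.card {g : Equiv.Perm (ZMod n × ZMod m) |
        g ∈ Subgroup.closure {σ₁, σ₂} ∧
        g ((1, 1) : ZMod n × ZMod m) = (1, 1) ∧
        g ((2, 1) : ZMod n × ZMod m) = (2, 1)} = 2 := by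
  have hn_odd : Odd n := hn ▸ hso.mul hmo
  have : Fact (2 < m) := ⟨hm⟩
  let : Invertible (2 : ZMod m) := (isUnit_two_of_odd_s11 hmo).invertible
  let φ : ZMod n →+* ZMod m := ZMod.castHom (hn ▸ dvd_mul_left m s) (ZMod m)
  have h_mem := conj_straighten_mem_signedAffineGroup_iff hn_odd (ZMod.ringHom_surjective φ)
    (straighten_mul_eq_straightRotation_mul hn_odd φ hσ₁)
    (straighten_mul_eq_straightReflection_mul hn_odd φ hσ₂)
  constructor
  · intro u₁ w₁ u₂ w₂ h₁ h₂
    obtain ⟨e, he⟩ := exists_fst_eq_add_units_of_lexCycle_adj h₁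
    obtain ⟨f, hf⟩ := exists_fst_eq_add_units_of_lexCycle_adj h₂
    obtain ⟨g, hg, hu, hw⟩ := exists_mem_signedAffineGroup_map_arc φ
      (u₁ := straighten u₁) (w₁ := straighten w₁) (u₂ := straighten u₂) (w₂ := straighten w₂) he hf
    refine ⟨(MulAut.conj straighten).symm g, (h_mem _).1 ?_, ?_, ?_⟩
    · rwa [MulEquiv.apply_symm_apply]
    · simp [hu]
    · simp [hw]
  · rw [← card_signedAffineGroup_fix_arc φ ZMod.neg_one_ne_one
      (u := straighten (1, 1)) (w := straighten (2, 1)) one_add_one_eq_two.symm]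
    refine Nat.card_congr ((MulAut.conj straighten).toEquiv.subtypeEquiv fun g ↦ ?_)
    simp [← h_mem]
end
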